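/- For every integer d ≥ 3, ∫₀¹ t^{d−2} g(t) dt = (d−2)! / (2^{d+1} · Γ(d/2+1)²); equivalently, (2/(d−2)!) ∫₀¹ t^{d−2} g(t) dt = 2^{−d} Γ(d/2+1)^{−2}. -/

import Mathlib

open Real Set

/-- The function `g(t) = (√(1-t²) - t arccos t)/π`. -/
noncomputable def gfun (t : ℝ) : ℝ := (Real.sqrt (1 - t ^ 2) - t * Real.arccos t) / π

lemma gfun_cont : Continuous gfun := by
  unfold gfun
  fun_prop

/-- Fundamental theorem of calculus for `P √(1-t²) + Q arccos t`. -/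
lemma ftc_aux (P Q P' Q' f : ℝ → ℝ) (hP : ∀ t, HasDerivAt P (P' t) t)
    (hQ : ∀ t, HasDerivAt Q (Q' t) t) (hf : Continuous f)
    (h : ∀ t, (P' t * (1 - t ^ 2) - P t * t - Q t) + √(1 - t ^ 2) * Q' t * arccos t
      = √(1 - t ^ 2) * f t ∨ 1 - t ^ 2 ≤ 0) :
    ∫ t in (0:ℝ)..1, f t = -(P 0 + Q 0 * (π / 2)) := by
  have hPc : Continuous P := continuous_iff_continuousAt.2 fun t => (hP t).continuousAt
  have hQc : Continuous Q := continuous_iff_continuousAt.2 fun t => (hQ t).continuousAt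
  have key := intervalIntegral.integral_eq_sub_of_hasDerivAt_of_le (a := (0:ℝ)) (b := 1)
    (f := fun t => P t * √(1 - t ^ 2) + Q t * arccos t) (f' := f) zero_le_one
    (by fun_prop) ?_ (hf.intervalIntegrable _ _)
  · rw [key]; simp
  · intro t ht
    have h1 : 0 < 1 - t ^ 2 := by nlinarith [ht.1, ht.2]
    have hs : 0 < √(1 - t ^ 2) := Real.sqrt_pos.2 h1
    have hsq : √(1 - t ^ 2) ^ 2 = 1 - t ^ 2 := Real.sq_sqrt h1.le
    have ha := Real.hasDerivAt_arccos (x := t) (by linarith [ht.1]) (by linarith [ht.2])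
    have hd : HasDerivAt (fun t : ℝ => 1 - t ^ 2) (-(2 * t)) t := by
      simpa using (hasDerivAt_pow 2 t).const_sub 1
    have hsd := hd.sqrt h1.ne'
    have hh := ((hP t).mul hsd).add ((hQ t).mul ha)
    refine hh.congr_deriv ?_
    have ht' := (h t).resolve_right (by linarith)
    field_simp
    rw [hsq]
    linarith

lemma s_sq_or (t : ℝ) : √(1 - t ^ 2) * √(1 - t ^ 2) = 1 - t ^ 2 ∨ 1 - t ^ 2 ≤ 0 := by
  rcases le_total (1 - t ^ 2) 0 with h | h
  · exact Or.inr h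
  · exact Or.inl (Real.mul_self_sqrt h)

lemma base0 : ∫ t in (0:ℝ)..1, t ^ 0 * gfun t = 1 / 8 := by
  have := ftc_aux (fun t => 3 / 4 * t / π) (fun t => (-t ^ 2 / 2 - 1 / 4) / π)
    (fun _ => 3 / 4 / π) (fun t => -t / π) (fun t => t ^ 0 * gfun t)
    (fun t => by simpa using ((hasDerivAt_id t).const_mul (3 / 4)).div_const π)
    (fun t => by
      refine (((((hasDerivAt_pow 2 t).neg).div_const 2).sub_const (1 / 4)).div_const π).congr_deriv ?_
      norm_num; ring)
    (by have := gfun_cont; fun_prop)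
    (fun t => (s_sq_or t).imp_left fun h => by
      unfold gfun
      have := pi_ne_zero
      field_simp
      linear_combination (-8 : ℝ) * h)
  rw [this]
  have := pi_ne_zero
  field_simp
  try norm_num
  try ring

lemma base1 : ∫ t in (0:ℝ)..1, t ^ 1 * gfun t = 1 / (9 * π) := by
  have := ftc_aux (fun t => (4 / 9 * t ^ 2 - 1 / 9) / π) (fun t => (-t ^ 3 / 3) / π)
    (fun t => 8 / 9 * t / π) (fun t => -t ^ 2 / π) (fun t => t ^ 1 * gfun t)
    (fun t => by
      refine ((((hasDerivAt_pow 2 t).const_mul (4 / 9)).sub_const (1 / 9)).div_const π).congr_deriv ?_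
      norm_num; ring)
    (fun t => by
      refine ((((hasDerivAt_pow 3 t).neg).div_const 3).div_const π).congr_deriv ?_
      norm_num; ring)
    (by have := gfun_cont; fun_prop)
    (fun t => (s_sq_or t).imp_left fun h => by
      unfold gfun
      have := pi_ne_zero
      field_simp
      linear_combination (-27 * t : ℝ) * h)
  rw [this]
  have := pi_ne_zero
  field_simp
  try norm_num
  try ring

lemma recur (n : ℕ) : ((n:ℝ) + 4) ^ 2 * ∫ t in (0:ℝ)..1, t ^ (n + 2) * gfun t =
    (n + 1) * (n + 2) * ∫ t in (0:ℝ)..1, t ^ n * gfun t := by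
  have hg := gfun_cont
  have := ftc_aux (fun t => (((n:ℝ) + 5) * t ^ (n + 3) - (n + 2) * t ^ (n + 1)) / π)
    (fun t => (((n:ℝ) + 1) * t ^ (n + 2) - (n + 4) * t ^ (n + 4)) / π)
    (fun t => (((n:ℝ) + 5) * ((n + 3) * t ^ (n + 2)) - (n + 2) * ((n + 1) * t ^ n)) / π)
    (fun t => (((n:ℝ) + 1) * ((n + 2) * t ^ (n + 1)) - (n + 4) * ((n + 4) * t ^ (n + 3))) / π)
    (fun t => ((n:ℝ) + 4) ^ 2 * (t ^ (n + 2) * gfun t) - (n + 1) * (n + 2) * (t ^ n * gfun t))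
    (fun t => by
      refine ((((hasDerivAt_pow (n + 3) t).const_mul _).sub
        ((hasDerivAt_pow (n + 1) t).const_mul _)).div_const π).congr_deriv ?_
      simp)
    (fun t => by
      refine ((((hasDerivAt_pow (n + 2) t).const_mul _).sub
        ((hasDerivAt_pow (n + 4) t).const_mul _)).div_const π).congr_deriv ?_
      simp)
    (by fun_prop)
    (fun t => (s_sq_or t).imp_left fun h => by
      unfold gfun
      have := pi_ne_zero
      field_simp
      linear_combination
        (-(((n:ℝ) + 4) ^ 2 * t ^ (n + 2) - (n + 1) * (n + 2) * t ^ n)) * h)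
  rw [intervalIntegral.integral_sub
      (Continuous.intervalIntegrable (by fun_prop) _ _)
      (Continuous.intervalIntegrable (by fun_prop) _ _),
    intervalIntegral.integral_const_mul, intervalIntegral.integral_const_mul] at this
  simp at this
  linarith

lemma main_aux (n : ℕ) : ∫ t in (0:ℝ)..1, t ^ n * gfun t =
    (Nat.factorial n : ℝ) / (2 ^ (n + 3) * Real.Gamma ((n : ℝ) / 2 + 2) ^ 2) := by
  induction n using Nat.twoStepInduction with
  | zero => rw [base0]; norm_num [Real.Gamma_two]
  | one =>
    rw [base1]
    have h : Real.Gamma (((1:ℕ) : ℝ) / 2 + 2) = 3 / 4 * √π := by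
      rw [show (((1:ℕ) : ℝ) / 2 + 2) = (1 / 2 + 1) + 1 by norm_num,
        Real.Gamma_add_one (by norm_num), Real.Gamma_add_one (by norm_num), Real.Gamma_one_half_eq]
      ring
    rw [h, mul_pow, Real.sq_sqrt pi_pos.le]
    have := pi_ne_zero
    norm_num
    field_simp
  | more n ih _ =>
    have h := recur n
    rw [ih] at h
    have hp : (0:ℝ) < (n:ℝ) / 2 + 2 := by positivity
    have hG : Real.Gamma (((n + 2 : ℕ) : ℝ) / 2 + 2) =
        ((n:ℝ) / 2 + 2) * Real.Gamma ((n:ℝ) / 2 + 2) := by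
      rw [← Real.Gamma_add_one hp.ne']; congr 1; push_cast; ring
    have hg := (Real.Gamma_pos_of_pos hp).ne'
    have hn : (n:ℝ) + 4 ≠ 0 := by positivity
    rw [hG, Nat.factorial_succ, Nat.factorial_succ]
    apply mul_left_cancel₀ (pow_ne_zero 2 hn)
    rw [h, show (n:ℝ) / 2 + 2 = (n + 4) / 2 by ring] at *
    push_cast
    field_simp
    ring

/-- `∫₀¹ t^{d-2} g(t) dt = (d-2)! / (2^{d+1} Γ(d/2+1)²)` for every integer
`d ≥ 3`. -/
theorem integral_pow_mul_gfun (d : ℕ) (hd : 3 ≤ d) :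
    ∫ t in (0:ℝ)..1, t ^ (d - 2) * gfun t =
      (Nat.factorial (d - 2) : ℝ) / (2 ^ (d + 1) * Real.Gamma ((d : ℝ) / 2 + 1) ^ 2) := by
  obtain ⟨n, rfl⟩ : ∃ n, d = n + 2 := ⟨d - 2, by omega⟩
  rw [show n + 2 - 2 = n by omega, main_aux n,
    show (((n + 2 : ℕ) : ℝ) / 2 + 1) = (n:ℝ) / 2 + 2 by push_cast; ring]
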